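/- arXiv:2206.14227 — 8 statements merged into one kernel-verified Lean document; each statement's English description precedes it below -/
import Mathlib

section
/- For all α, β ∈ ASP: Inv(α ◁ β) ∩ Inv(β) = ∅ (so the composition (α ◁ β) ∘ β⁻¹ is a reduced product), and Inv((α ◁ β)⁻¹) ⊆ Inv(α⁻¹) (that is, α ◁ β ≤_R α). -/
/-!
Write `f a b ℓ = s_α(a,ℓ) - s_{β⁻¹}(b,ℓ)`, so that `s_γ(a,b) = max_ℓ f a b ℓ`. Slipface functions
change by `0` or `1` when an argument moves by one step, and the step records a value of the
permutation (`sF_succ_left`, `sF_succ_right`); in addition `s(a',ℓ) - s(a,ℓ)` is antitone in `ℓ`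
for `a ≤ a'` (`sF_diff_anti`).

For the second claim, let `u < v` with `γ⁻¹ v < γ⁻¹ u =: b`. In the first argument `s_γ(·,b)`
increases from `u` to `u + 1` and is constant from `v` to `v + 1`. Hence a maximizer `ℓ₁` of
`f (u + 1) b` satisfies `ℓ₁ ≤ α⁻¹ u`, and every maximizer of `f v b` is `> α⁻¹ v`. If
`α⁻¹ u < α⁻¹ v`, then `ℓ₁` is below every maximizer of `f v b`, so by antitonicity `ℓ₁` is itself
a maximizer of `f v b`, which is absurd. The first claim is the same argument in the second
argument of `s_γ`, comparing maximizers at `v` and at `u + 1`.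
-/

/-- A permutation of ℤ is almost-sign-preserving if only finitely many `n` have
exactly one of `n`, `α n` negative. -/
def ASP (α : Equiv.Perm ℤ) : Prop := {n : ℤ | Xor' (n < 0) (α n < 0)}.Finite

/-- The slipface function `s_α(a,b) = #{n ≥ b : α n < a}`. -/
noncomputable def sF (α : Equiv.Perm ℤ) : ℤ → ℤ → ℕ :=
  fun a b => {n : ℤ | b ≤ n ∧ α n < a}.ncard

/-- The shift `χ_α = s_α(0,0) - s_{α⁻¹}(0,0)`. -/
noncomputable def shiftASP (α : Equiv.Perm ℤ) : ℤ :=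
  (sF α 0 0 : ℤ) - (sF α⁻¹ 0 0 : ℤ)

/-- Bruhat order on ASP: pointwise comparison of slipface functions. -/
def BruhatLE (α β : Equiv.Perm ℤ) : Prop := ∀ a b : ℤ, sF α a b ≤ sF β a b

/-- `α ≤_χ β`: Bruhat order together with equality of shifts. -/
def BruhatLEchi (α β : Equiv.Perm ℤ) : Prop := BruhatLE α β ∧ shiftASP α = shiftASP β

/-- `γ` is the Demazure product `α ⋆ β`:
`s_γ(a,b) = min_{ℓ} [s_α(a,ℓ) + s_β(ℓ,b)]`. -/
def IsDem (α β γ : Equiv.Perm ℤ) : Prop :=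
  ∀ a b : ℤ, IsLeast {x : ℕ | ∃ ℓ : ℤ, x = sF α a ℓ + sF β ℓ b} (sF γ a b)

/-- `γ = α ◁ β`: `s_γ(a,b) = max_ℓ [s_α(a,ℓ) - s_{β⁻¹}(b,ℓ)]`. -/
def IsTriL (α β γ : Equiv.Perm ℤ) : Prop :=
  ∀ a b : ℤ, IsGreatest {x : ℤ | ∃ ℓ : ℤ, x = (sF α a ℓ : ℤ) - (sF β⁻¹ b ℓ : ℤ)}
    ((sF γ a b : ℤ))

/-- `γ = α ▷ β`: `s_γ(a,b) = max_ℓ [s_β(ℓ,b) - s_{α⁻¹}(ℓ,a)]`. -/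
def IsTriR (α β γ : Equiv.Perm ℤ) : Prop :=
  ∀ a b : ℤ, IsGreatest {x : ℤ | ∃ ℓ : ℤ, x = (sF β ℓ b : ℤ) - (sF α⁻¹ ℓ a : ℤ)}
    ((sF γ a b : ℤ))

/-- The set of inversions of a permutation. -/
def InvSet (α : Equiv.Perm ℤ) : Set (ℤ × ℤ) := {p : ℤ × ℤ | p.1 < p.2 ∧ α p.2 < α p.1}

theorem ASP.inv {α : Equiv.Perm ℤ} (hα : ASP α) : ASP α⁻¹ := by
  have h := hα.image α
  refine h.subset ?_
  intro n hn
  refine ⟨α⁻¹ n, ?_, by simp⟩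
  have h1 : α (α⁻¹ n) = n := α.apply_symm_apply n
  simp only [Set.mem_ofPred_eq, h1, Xor', Xor] at hn ⊢
  tauto

theorem ASP.finite {α : Equiv.Perm ℤ} (hα : ASP α) (a b : ℤ) :
    {n : ℤ | b ≤ n ∧ α n < a}.Finite := by
  have h1 : (α ⁻¹' Set.Ico 0 a).Finite :=
    (Set.finite_Ico (0 : ℤ) a).preimage α.injective.injOn
  refine ((hα.union (Set.finite_Ico b 0)).union h1).subset ?_
  intro n hn
  simp only [Set.mem_union, Set.mem_ofPred_eq, Set.mem_Ico, Set.mem_preimage, Xor', Xor] at hn ⊢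
  omega

/-- Raising the first argument from `a` to `a + 1` adds the point `α⁻¹ a` if it is `≥ b`. -/
theorem sF_succ_left {α : Equiv.Perm ℤ} (hα : ASP α) (a b : ℤ) :
    sF α (a + 1) b = sF α a b + if b ≤ α⁻¹ a then 1 else 0 := by
  have key : ∀ n, α n = a ↔ n = α⁻¹ a := fun n => by
    rw [Equiv.Perm.eq_inv_iff_eq]
  unfold sF
  split_ifs with h
  · rw [← Set.ncard_insert_of_notMem (a := α⁻¹ a) (by simp) (hα.finite a b)]
    congr 1
    ext n
    simp only [Set.mem_ofPred_eq, Set.mem_insert_iff, ← key, Int.lt_add_one_iff, le_iff_lt_or_eq]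
    have := key n
    grind
  · rw [add_zero]
    congr 1
    ext n
    simp only [Set.mem_ofPred_eq]
    have := key n
    grind

/-- Lowering the second argument from `b + 1` to `b` adds the point `b` if `α b < a`. -/
theorem sF_succ_right {α : Equiv.Perm ℤ} (hα : ASP α) (a b : ℤ) :
    sF α a b = sF α a (b + 1) + if α b < a then 1 else 0 := by
  unfold sF
  split_ifs with h
  · rw [← Set.ncard_insert_of_notMem (a := b) (by simp) (hα.finite a (b + 1))]
    congr 1
    ext n
    simp only [Set.mem_ofPred_eq, Set.mem_insert_iff]
    grind
  · rw [add_zero]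
    congr 1
    ext n
    simp only [Set.mem_ofPred_eq]
    grind

/-- The difference `s_α(a',ℓ) - s_α(a,ℓ)` counts the `n ≥ ℓ` with `a ≤ α n < a'`, so it is
antitone in `ℓ`. -/
theorem sF_diff_anti {α : Equiv.Perm ℤ} (hα : ASP α) {a a' l l' : ℤ} (ha : a ≤ a')
    (hl : l ≤ l') : sF α a' l' + sF α a l ≤ sF α a' l + sF α a l' := by
  induction a', ha using Int.leInduction with
  | base => omega
  | succ n _ ih =>
    rw [sF_succ_left hα n l, sF_succ_left hα n l']
    split_ifs <;> omega

/-- `Inv(α ◁ β) ∩ Inv(β) = ∅` (so `(α ◁ β) ∘ β⁻¹` is a reduced product), and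
`Inv((α ◁ β)⁻¹) ⊆ Inv(α⁻¹)` (i.e. `α ◁ β ≤_R α`). -/
theorem triL_inversions (α β γ : Equiv.Perm ℤ) (hα : ASP α) (hβ : ASP β) (hγ : ASP γ)
    (htri : IsTriL α β γ) :
    InvSet γ ∩ InvSet β = ∅ ∧ InvSet γ⁻¹ ⊆ InvSet α⁻¹ := by
  have hle : ∀ a b l : ℤ, (sF α a l : ℤ) - sF β⁻¹ b l ≤ sF γ a b :=
    fun a b l => (htri a b).2 ⟨l, rfl⟩
  have hex : ∀ a b : ℤ, ∃ l : ℤ, (sF γ a b : ℤ) = (sF α a l : ℤ) - sF β⁻¹ b l :=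
    fun a b => (htri a b).1
  constructor
  · rw [Set.eq_empty_iff_forall_notMem]
    rintro ⟨u, v⟩ ⟨⟨huv, hg⟩, -, hb⟩
    simp only at huv hg hb
    -- At the level `a = γ u`, the point `v` is counted by `s_γ` and the point `u` is not.
    have g1 := sF_succ_right hγ (γ u) v
    have g2 := sF_succ_right hγ (γ u) u
    rw [if_pos hg] at g1
    rw [if_neg (lt_irrefl _)] at g2
    obtain ⟨l₁, e1⟩ := hex (γ u) v
    obtain ⟨l₂, e2⟩ := hex (γ u) (u + 1)
    have b1 := sF_succ_left hβ.inv v l₁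
    have b2 := sF_succ_left hβ.inv u l₂
    have b3 := sF_succ_left hβ.inv u l₁
    rw [inv_inv] at b1 b2 b3
    have i1 := hle (γ u) (v + 1) l₁
    have i2 := hle (γ u) u l₂
    have i3 := hle (γ u) u l₁
    have i4 := hle (γ u) v l₂
    have h1 : l₁ ≤ β v := by
      by_contra h
      rw [if_neg h] at b1
      omega
    have h2 : β u < l₂ := by
      by_contra h
      rw [if_pos (not_lt.mp h)] at b2
      omega
    rw [if_pos (by omega)] at b3
    have := sF_diff_anti hβ.inv (a := u + 1) (a' := v) (l := l₁) (l' := l₂)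
      (by omega) (by omega)
    omega
  · rintro ⟨u, v⟩ ⟨huv, hg⟩
    refine ⟨huv, ?_⟩
    simp only at huv hg ⊢
    by_contra hcon
    -- At the level `b = γ⁻¹ u`, the value `u` is counted by `s_γ` and the value `v` is not.
    have g1 := sF_succ_left hγ u (γ⁻¹ u)
    have g2 := sF_succ_left hγ v (γ⁻¹ u)
    rw [if_pos le_rfl] at g1
    rw [if_neg (not_le.mpr hg)] at g2
    obtain ⟨l₁, e1⟩ := hex (u + 1) (γ⁻¹ u)
    obtain ⟨l₂, e2⟩ := hex v (γ⁻¹ u)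
    have b1 := sF_succ_left hα u l₁
    have b2 := sF_succ_left hα v l₂
    have b3 := sF_succ_left hα v l₁
    have i1 := hle u (γ⁻¹ u) l₁
    have i2 := hle (v + 1) (γ⁻¹ u) l₂
    have i3 := hle (v + 1) (γ⁻¹ u) l₁
    have i4 := hle (u + 1) (γ⁻¹ u) l₂
    have h1 : l₁ ≤ α⁻¹ u := by
      by_contra h
      rw [if_neg h] at b1
      omega
    have h2 : α⁻¹ v < l₂ := by
      by_contra h
      rw [if_pos (not_lt.mp h)] at b2
      omega
    rw [if_pos (by omega)] at b3
    have := sF_diff_anti hα (a := u + 1) (a' := v) (l := l₁) (l' := l₂)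
      (by omega) (by omega)
    omega
end

section
/- For all permutations α, β of ℤ, the following are equivalent: (1) Inv(α) ∩ Inv(β⁻¹) = ∅ (the product α ∘ β is reduced); (2) Inv(α⁻¹) ⊆ Inv((α ∘ β)⁻¹) (i.e. α ≤_R α ∘ β); (3) Inv(β) ⊆ Inv(α ∘ β) (i.e. β ≤_L α ∘ β). -/
theorem inter_eq_empty_iff_left (α β : Equiv.Perm ℤ) :
    InvSet α ∩ InvSet β⁻¹ = ∅ ↔ InvSet β ⊆ InvSet (α * β) := by
  rw [Set.eq_empty_iff_forall_notMem]
  constructor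
  · rintro h ⟨u, v⟩ ⟨huv, hβ⟩
    refine ⟨huv, ?_⟩
    change u < v at huv
    change β v < β u at hβ
    change α (β v) < α (β u)
    by_contra hα
    have hne : α (β u) ≠ α (β v) := fun e => hβ.ne' (α.injective e)
    exact h (β v, β u) ⟨⟨hβ, lt_of_le_of_ne (not_lt.mp hα) hne⟩, hβ, by simpa using huv⟩
  · rintro h ⟨x, y⟩ ⟨⟨hxy, hα⟩, -, hβ⟩
    have hmem : (β⁻¹ y, β⁻¹ x) ∈ InvSet β := ⟨hβ, by simpa using hxy⟩
    have hlt : α x < α y := by simpa using (h hmem).2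
    exact lt_asymm hα hlt

/-- For permutations of ℤ, the following are equivalent: the product `α ∘ β` is
reduced (`Inv(α) ∩ Inv(β⁻¹) = ∅`); `α ≤_R α ∘ β`; `β ≤_L α ∘ β`. -/
theorem reduced_iff_weak (α β : Equiv.Perm ℤ) :
    (InvSet α ∩ InvSet β⁻¹ = ∅ ↔ InvSet α⁻¹ ⊆ InvSet (α * β)⁻¹) ∧
    (InvSet α ∩ InvSet β⁻¹ = ∅ ↔ InvSet β ⊆ InvSet (α * β)) := by
  refine ⟨?_, inter_eq_empty_iff_left α β⟩
  have h := inter_eq_empty_iff_left β⁻¹ α⁻¹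
  rwa [inv_inv, Set.inter_comm, ← mul_inv_rev] at h
end

section
/- Let s and t be slipfaces, of shifts χ_s and χ_t respectively. Then s ⋆ t, s ◁ t, and s ▷ t are all slipfaces of shift χ_s + χ_t (in particular the maxima defining ◁ and ▷ exist), and these operations satisfy (s ⋆ t)^∨ = t^∨ ⋆ s^∨ and (s ◁ t)^∨ = t^∨ ▷ s^∨. -/
/-!
Write `x = χs + a - ℓ` and `y = χt + ℓ - b`, so that `x + y = χs + χt + a - b`. Call `s` *standard*
at `(a, b)` when `s a b = max 0 (χs + a - b)`; by (S3) each row and each column of a slipface has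
only finitely many non-standard places.

The term of `s ◁ t` at `ℓ` is `s a ℓ - t ℓ b + y`. It is at most `s a ℓ + min 0 y` by (S2) for `t`,
hence:
* if `s` is standard at `(a, ℓ)`, the term is at most `max 0 x + min 0 y ≤ max 0 (x + y)`
  (`triL_le_of_standard_left`);
* in every case, since `s a` is nonincreasing with steps of size at most one, the term is at most
  `s a (b - χt)` (`triL_le`), a bound independent of `ℓ`.

The second bound makes the maximum exist. Together they give (S3): for fixed `b` it is enough that
`s` is standard at `(a, b - χt)`, and for fixed `a` only the finitely many `ℓ` with `s`
non-standard at `(a, ℓ)` matter, each spoiling at most an interval of `b`. (S2) comes from terms with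
`ℓ → ±∞`, and (S1) passes from the terms to their maximum.

For `s ⋆ t`, (S2) is `max 0 (x + y) ≤ max 0 x + max 0 y`, and (S3) for fixed `b` follows by taking
for `ℓ` a fixed very negative or very positive integer at which `t` is standard.

The reflection `s ↦ ((a, b) ↦ s (-b) (-a))` preserves slipfaces and their shifts and turns `s ⋆ t`
into `t ⋆ s` and `s ▷ t` into `t ◁ s`; this gives (S3) of `s ⋆ t` for fixed `a`, and everything
about `▷`. The duality identities hold term by term.
-/

/-- A slipface function of shift `χ`: conditions (S1), (S2), (S3). -/
def IsSlipfaceOf (χ : ℤ) (s : ℤ → ℤ → ℕ) : Prop :=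
  (∀ a b : ℤ, (s a b ≤ s (a + 1) b ∧ s (a + 1) b ≤ s a b + 1) ∧
              (s a (b + 1) ≤ s a b ∧ s a b ≤ s a (b + 1) + 1)) ∧
  (∀ a b : ℤ, max 0 (χ + a - b) ≤ (s a b : ℤ)) ∧
  (∀ b : ℤ, {a : ℤ | (s a b : ℤ) ≠ max 0 (χ + a - b)}.Finite) ∧
  (∀ a : ℤ, {b : ℤ | (s a b : ℤ) ≠ max 0 (χ + a - b)}.Finite)

/-- A slipface is a slipface of some shift. -/
def IsSlipface (s : ℤ → ℤ → ℕ) : Prop := ∃ χ : ℤ, IsSlipfaceOf χ s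

/-- Submodularity: `s(a+1,b) - s(a,b) - s(a+1,b+1) + s(a,b+1) ≥ 0`. -/
def SubmodularSF (s : ℤ → ℤ → ℕ) : Prop :=
  ∀ a b : ℤ, s a b + s (a + 1) (b + 1) ≤ s (a + 1) b + s a (b + 1)

/-- The dual slipface: `s^∨(b,a) = s(a,b) - (χ + a - b)` (for `s` of shift `χ`). -/
def dualSF (χ : ℤ) (s : ℤ → ℤ → ℕ) : ℤ → ℤ → ℤ :=
  fun b a => (s a b : ℤ) - (χ + a - b)

/-- `u = s ⋆ t`: `u(a,b) = min_ℓ [s(a,ℓ) + t(ℓ,b)]`. -/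
def IsStarSF (s t u : ℤ → ℤ → ℕ) : Prop :=
  ∀ a b : ℤ, IsLeast {x : ℕ | ∃ ℓ : ℤ, x = s a ℓ + t ℓ b} (u a b)

/-- The set of values `s(a,ℓ) - t^∨(b,ℓ)` whose maximum defines `(s ◁ t)(a,b)`,
where `χt` is the shift of `t`. -/
def TriLSet (χt : ℤ) (s t : ℤ → ℤ → ℕ) (a b : ℤ) : Set ℤ :=
  {x : ℤ | ∃ ℓ : ℤ, x = (s a ℓ : ℤ) - dualSF χt t b ℓ}

/-- `u = s ◁ t`: `u(a,b) = max_ℓ [s(a,ℓ) - t^∨(b,ℓ)]` (`χt` the shift of `t`). -/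
def IsTriLSF (χt : ℤ) (s t u : ℤ → ℤ → ℕ) : Prop :=
  ∀ a b : ℤ, IsGreatest (TriLSet χt s t a b) ((u a b : ℤ))

/-- The set of values `t(ℓ,b) - s^∨(ℓ,a)` whose maximum defines `(s ▷ t)(a,b)`,
where `χs` is the shift of `s`. -/
def TriRSet (χs : ℤ) (s t : ℤ → ℤ → ℕ) (a b : ℤ) : Set ℤ :=
  {x : ℤ | ∃ ℓ : ℤ, x = (t ℓ b : ℤ) - dualSF χs s ℓ a}

/-- `u = s ▷ t`: `u(a,b) = max_ℓ [t(ℓ,b) - s^∨(ℓ,a)]` (`χs` the shift of `s`). -/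
def IsTriRSF (χs : ℤ) (s t u : ℤ → ℤ → ℕ) : Prop :=
  ∀ a b : ℤ, IsGreatest (TriRSet χs s t a b) ((u a b : ℤ))

/-- Pointwise (Bruhat) order on slipface functions. -/
def PLE (s t : ℤ → ℤ → ℕ) : Prop := ∀ a b : ℤ, s a b ≤ t a b

/-- The reflection of `s` in the antidiagonal; it preserves (S1)-(S3) and the shift. -/
def reflSF (s : ℤ → ℤ → ℕ) : ℤ → ℤ → ℕ := fun a b => s (-b) (-a)

lemma IsSlipfaceOf.refl {χ : ℤ} {s : ℤ → ℤ → ℕ} (hs : IsSlipfaceOf χ s) :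
    IsSlipfaceOf χ (reflSF s) := by
  obtain ⟨h1, h2, h3, h4⟩ := hs
  refine ⟨fun a b => ?_, fun a b => ?_, fun b => ?_, fun a => ?_⟩
  · have e1 := (h1 (-b) (-(a + 1))).2
    have e2 := (h1 (-(b + 1)) (-a)).1
    rw [show -(a + 1) + 1 = -a by ring] at e1
    rw [show -(b + 1) + 1 = -b by ring] at e2
    exact ⟨e1, e2⟩
  · have := h2 (-b) (-a)
    rwa [show χ + -b - -a = χ + a - b by ring] at this
  · refine ((h4 (-b)).preimage neg_injective.injOn).subset fun a ha => ?_
    simp only [Set.mem_preimage, Set.mem_ofPred_eq, reflSF] at ha ⊢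
    rwa [show χ + -b - -a = χ + a - b by ring]
  · refine ((h3 (-a)).preimage neg_injective.injOn).subset fun b hb => ?_
    simp only [Set.mem_preimage, Set.mem_ofPred_eq, reflSF] at hb ⊢
    rwa [show χ + -b - -a = χ + a - b by ring]

lemma reflSF_reflSF (s : ℤ → ℤ → ℕ) : reflSF (reflSF s) = s := by
  funext a b
  simp [reflSF]

lemma isStarSF_refl {s t u : ℤ → ℤ → ℕ} (hu : IsStarSF s t u) :
    IsStarSF (reflSF t) (reflSF s) (reflSF u) := by
  intro a b
  obtain ⟨⟨ℓ, hℓ⟩, hle⟩ := hu (-b) (-a)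
  refine ⟨⟨-ℓ, ?_⟩, ?_⟩
  · simp only [reflSF, neg_neg]
    omega
  · rintro x ⟨m, rfl⟩
    exact hle ⟨-m, by simp only [reflSF]; omega⟩

lemma triLSet_refl (χs : ℤ) (s t : ℤ → ℤ → ℕ) (a b : ℤ) :
    TriLSet χs (reflSF t) (reflSF s) (-b) (-a) = TriRSet χs s t a b := by
  ext x
  constructor
  · rintro ⟨ℓ, rfl⟩
    exact ⟨-ℓ, by simp only [dualSF, reflSF, neg_neg]; ring⟩
  · rintro ⟨ℓ, rfl⟩
    exact ⟨-ℓ, by simp only [dualSF, reflSF, neg_neg]; ring⟩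

/-- Moving the second argument of `s` from `n` to `m` changes `s` by at most one per step,
in the nonincreasing direction. -/
lemma IsSlipfaceOf.right_steps {χ : ℤ} {s : ℤ → ℤ → ℕ} (hs : IsSlipfaceOf χ s) (a : ℤ)
    {m n : ℤ} (h : m ≤ n) :
    (s a n : ℤ) ≤ s a m ∧ (s a m : ℤ) ≤ s a n + (n - m) := by
  induction n, h using Int.leInduction with
  | base => omega
  | succ n _ ih =>
    have := (hs.1 a n).2
    omega

lemma exists_ge_notMem {S : Set ℤ} (hS : S.Finite) (M : ℤ) : ∃ ℓ, M ≤ ℓ ∧ ℓ ∉ S :=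
  (Set.Ici_infinite M).exists_notMem_finite hS

lemma exists_le_notMem {S : Set ℤ} (hS : S.Finite) (M : ℤ) : ∃ ℓ, ℓ ≤ M ∧ ℓ ∉ S :=
  (Set.Iic_infinite M).exists_notMem_finite hS

/-- For fixed `b` and very negative first argument, a slipface vanishes. -/
lemma IsSlipfaceOf.exists_zero {χ : ℤ} {t : ℤ → ℤ → ℕ} (ht : IsSlipfaceOf χ t) (b : ℤ) :
    ∃ ℓ, ℓ ≤ b - χ ∧ (t ℓ b : ℤ) = 0 := by
  obtain ⟨ℓ, h, hn⟩ := exists_le_notMem (ht.2.2.1 b) (b - χ)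
  simp only [Set.mem_ofPred_eq, not_not] at hn
  exact ⟨ℓ, h, by omega⟩

/-- For fixed `b` and large first argument, a slipface equals its linear lower bound. -/
lemma IsSlipfaceOf.exists_linear {χ : ℤ} {t : ℤ → ℤ → ℕ} (ht : IsSlipfaceOf χ t) (b : ℤ) :
    ∃ ℓ, b - χ ≤ ℓ ∧ (t ℓ b : ℤ) = χ + ℓ - b := by
  obtain ⟨ℓ, h, hn⟩ := exists_ge_notMem (ht.2.2.1 b) (b - χ)
  simp only [Set.mem_ofPred_eq, not_not] at hn
  exact ⟨ℓ, h, by omega⟩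

section
variable {χs χt : ℤ} {s t : ℤ → ℤ → ℕ}

/-- A uniform bound on the terms of `s ◁ t`. -/
lemma triL_le (hs : IsSlipfaceOf χs s) (ht : IsSlipfaceOf χt t) (a b ℓ : ℤ) :
    (s a ℓ : ℤ) - dualSF χt t b ℓ ≤ s a (b - χt) := by
  have h2 := ht.2.1 ℓ b
  simp only [dualSF]
  rcases le_total ℓ (b - χt) with h | h
  · have := hs.right_steps a h
    omega
  · have := hs.right_steps a h
    omega

lemma triL_le_of_standard_left (ht : IsSlipfaceOf χt t) {a b ℓ : ℤ}
    (h : (s a ℓ : ℤ) = max 0 (χs + a - ℓ)) :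
    (s a ℓ : ℤ) - dualSF χt t b ℓ ≤ max 0 (χs + χt + a - b) := by
  have h2 := ht.2.1 ℓ b
  simp only [dualSF]
  omega

/-- The lower bound (S2) for `s ◁ t`, stated for arbitrary upper bounds of its terms. -/
lemma le_of_triL_upper (hs : IsSlipfaceOf χs s) (ht : IsSlipfaceOf χt t) {a b m : ℤ}
    (hm : ∀ ℓ, (s a ℓ : ℤ) - dualSF χt t b ℓ ≤ m) : max 0 (χs + χt + a - b) ≤ m := by
  simp only [dualSF] at hm
  obtain ⟨p, -, hp⟩ := ht.exists_zero b
  obtain ⟨q, -, hq⟩ := ht.exists_linear b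
  have h1 := hm p
  have h2 := hm q
  have h3 := hs.2.1 a p
  omega

lemma exists_triL (hs : IsSlipfaceOf χs s) (ht : IsSlipfaceOf χt t) (a b : ℤ) :
    ∃ m : ℕ, IsGreatest (TriLSet χt s t a b) (m : ℤ) := by
  obtain ⟨m, ⟨ℓ, hℓ⟩, hm⟩ := Int.exists_greatest_of_bdd (P := fun x => x ∈ TriLSet χt s t a b)
    ⟨s a (b - χt), by rintro x ⟨ℓ, rfl⟩; exact triL_le hs ht a b ℓ⟩ ⟨_, 0, rfl⟩
  have h0 := le_of_triL_upper hs ht (fun ℓ => hm _ ⟨ℓ, rfl⟩)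
  lift m to ℕ using (le_max_left _ _).trans h0
  exact ⟨m, ⟨ℓ, hℓ⟩, fun x hx => hm x hx⟩

lemma isSlipfaceOf_triL (hs : IsSlipfaceOf χs s) (ht : IsSlipfaceOf χt t) {v : ℤ → ℤ → ℕ}
    (hv : IsTriLSF χt s t v) : IsSlipfaceOf (χs + χt) v := by
  have hat : ∀ a b, ∃ ℓ, (v a b : ℤ) = (s a ℓ : ℤ) - dualSF χt t b ℓ := fun a b => (hv a b).1
  have hub : ∀ a b ℓ, (s a ℓ : ℤ) - dualSF χt t b ℓ ≤ v a b := fun a b ℓ => (hv a b).2 ⟨ℓ, rfl⟩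
  have hlow : ∀ a b, max 0 (χs + χt + a - b) ≤ (v a b : ℤ) :=
    fun a b => le_of_triL_upper hs ht (hub a b)
  refine ⟨fun a b => ?_, hlow, fun b => ?_, fun a => ?_⟩
  · -- Evaluate both sides at the index attaining the maximum at either of the two places.
    obtain ⟨p, hp⟩ := hat a b
    obtain ⟨q, hq⟩ := hat (a + 1) b
    obtain ⟨r, hr⟩ := hat a (b + 1)
    have u1 := hub (a + 1) b p
    have u2 := hub a b q
    have u3 := hub a b r
    have u4 := hub a (b + 1) p
    have s1 := (hs.1 a p).1
    have s2 := (hs.1 a q).1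
    have t1 := (ht.1 r b).2
    have t2 := (ht.1 p b).2
    simp only [dualSF] at *
    omega
  · refine (hs.2.2.1 (b - χt)).subset fun a ha => ?_
    simp only [Set.mem_ofPred_eq] at ha ⊢
    contrapose! ha
    obtain ⟨ℓ, hℓ⟩ := hat a b
    have h1 := triL_le hs ht a b ℓ
    have h2 := hlow a b
    omega
  · refine ((hs.2.2.2 a).biUnion fun ℓ _ =>
      Set.finite_Icc (χs + χt + a - s a ℓ) (s a ℓ + χt + ℓ)).subset fun b hb => ?_
    obtain ⟨ℓ, hℓ⟩ := hat a b
    have h2 := hlow a b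
    simp only [Set.mem_ofPred_eq] at hb
    refine Set.mem_biUnion (x := ℓ) (fun h => ?_) ?_
    · have := triL_le_of_standard_left ht (b := b) h
      omega
    · have h3 := ht.2.1 ℓ b
      simp only [dualSF] at hℓ
      simp only [Set.mem_Icc]
      omega

/-- Condition (S3) of `s ⋆ t` in the first variable. -/
lemma star_finite_left (hs : IsSlipfaceOf χs s) (ht : IsSlipfaceOf χt t) {u : ℤ → ℤ → ℕ}
    (hu : IsStarSF s t u) (hlow : ∀ a b, max 0 (χs + χt + a - b) ≤ (u a b : ℤ)) (b : ℤ) :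
    {a : ℤ | (u a b : ℤ) ≠ max 0 (χs + χt + a - b)}.Finite := by
  obtain ⟨p, hp, hp'⟩ := ht.exists_zero b
  obtain ⟨q, hq, hq'⟩ := ht.exists_linear b
  refine (((hs.2.2.1 p).union (hs.2.2.1 q)).union
    (Set.finite_Icc (p - χs) (q - χs))).subset fun a ha => ?_
  have h1 : u a b ≤ s a p + t p b := (hu a b).2 ⟨p, rfl⟩
  have h2 : u a b ≤ s a q + t q b := (hu a b).2 ⟨q, rfl⟩
  have h3 := hlow a b
  simp only [Set.mem_union, Set.mem_ofPred_eq, Set.mem_Icc] at ha ⊢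
  omega

lemma star_low (hs : IsSlipfaceOf χs s) (ht : IsSlipfaceOf χt t) {u : ℤ → ℤ → ℕ}
    (hu : IsStarSF s t u) (a b : ℤ) : max 0 (χs + χt + a - b) ≤ (u a b : ℤ) := by
  obtain ⟨ℓ, hℓ⟩ := (hu a b).1
  have h1 := hs.2.1 a ℓ
  have h2 := ht.2.1 ℓ b
  omega

lemma isSlipfaceOf_star (hs : IsSlipfaceOf χs s) (ht : IsSlipfaceOf χt t) {u : ℤ → ℤ → ℕ}
    (hu : IsStarSF s t u) : IsSlipfaceOf (χs + χt) u := by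
  have hat : ∀ a b, ∃ ℓ, u a b = s a ℓ + t ℓ b := fun a b => (hu a b).1
  have hlb : ∀ a b ℓ, u a b ≤ s a ℓ + t ℓ b := fun a b ℓ => (hu a b).2 ⟨ℓ, rfl⟩
  refine ⟨fun a b => ?_, star_low hs ht hu, star_finite_left hs ht hu (star_low hs ht hu),
    fun a => ?_⟩
  · obtain ⟨p, hp⟩ := hat a b
    obtain ⟨q, hq⟩ := hat (a + 1) b
    obtain ⟨r, hr⟩ := hat a (b + 1)
    have u1 := hlb (a + 1) b p
    have u2 := hlb a b q
    have u3 := hlb a b r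
    have u4 := hlb a (b + 1) p
    have s1 := (hs.1 a p).1
    have s2 := (hs.1 a q).1
    have t1 := (ht.1 r b).2
    have t2 := (ht.1 p b).2
    omega
  · have hu' := isStarSF_refl hu
    have := star_finite_left ht.refl hs.refl hu' (star_low ht.refl hs.refl hu') (-a)
    refine (this.preimage neg_injective.injOn).subset fun b hb => ?_
    simp only [Set.mem_preimage, Set.mem_ofPred_eq, reflSF, neg_neg] at hb ⊢
    rwa [show χt + χs + -b - -a = χs + χt + a - b by ring]

end

/-- For slipfaces `s, t` of shifts `χs, χt`: the maxima defining `s ◁ t` and `s ▷ t`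
exist (and are nonnegative); `s ⋆ t`, `s ◁ t`, `s ▷ t` are slipfaces of shift
`χs + χt`; and `(s ⋆ t)^∨ = t^∨ ⋆ s^∨`, `(s ◁ t)^∨ = t^∨ ▷ s^∨`. -/
theorem slipface_ops_defined (χs χt : ℤ) (s t : ℤ → ℤ → ℕ)
    (hs : IsSlipfaceOf χs s) (ht : IsSlipfaceOf χt t) :
    (∀ a b : ℤ, ∃ m : ℕ, IsGreatest (TriLSet χt s t a b) (m : ℤ)) ∧
    (∀ a b : ℤ, ∃ m : ℕ, IsGreatest (TriRSet χs s t a b) (m : ℤ)) ∧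
    (∀ u : ℤ → ℤ → ℕ, IsStarSF s t u → IsSlipfaceOf (χs + χt) u ∧
      (∀ a b : ℤ, IsLeast {x : ℤ | ∃ ℓ : ℤ, x = dualSF χt t b ℓ + dualSF χs s ℓ a}
        (dualSF (χs + χt) u b a))) ∧
    (∀ v : ℤ → ℤ → ℕ, IsTriLSF χt s t v → IsSlipfaceOf (χs + χt) v ∧
      (∀ a b : ℤ, IsGreatest {x : ℤ | ∃ ℓ : ℤ, x = dualSF χs s ℓ a - (t ℓ b : ℤ)}
        (dualSF (χs + χt) v b a))) ∧
    (∀ w : ℤ → ℤ → ℕ, IsTriRSF χs s t w → IsSlipfaceOf (χs + χt) w) := by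
  refine ⟨exists_triL hs ht, fun a b => ?_, fun u hu => ⟨isSlipfaceOf_star hs ht hu, fun a b => ?_⟩,
    fun v hv => ⟨isSlipfaceOf_triL hs ht hv, fun a b => ?_⟩, fun w hw => ?_⟩
  · rw [← triLSet_refl]
    exact exists_triL ht.refl hs.refl (-b) (-a)
  · obtain ⟨⟨ℓ, hℓ⟩, hle⟩ := hu a b
    refine ⟨⟨ℓ, by simp only [dualSF]; omega⟩, ?_⟩
    rintro x ⟨m, rfl⟩
    have : u a b ≤ s a m + t m b := hle ⟨m, rfl⟩
    simp only [dualSF]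
    omega
  · obtain ⟨⟨ℓ, hℓ⟩, hge⟩ := hv a b
    refine ⟨⟨ℓ, by simp only [dualSF] at *; omega⟩, ?_⟩
    rintro x ⟨m, rfl⟩
    have : (s a m : ℤ) - dualSF χt t b m ≤ v a b := hge ⟨m, rfl⟩
    simp only [dualSF] at *
    omega
  · have hw' : IsTriLSF χs (reflSF t) (reflSF s) (reflSF w) := fun a b => by
      have := hw (-b) (-a)
      rwa [← triLSet_refl, neg_neg, neg_neg] at this
    have := (isSlipfaceOf_triL ht.refl hs.refl hw').refl
    rwa [reflSF_reflSF, add_comm] at this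
end

section
/- Let s, t, u be slipfaces. The following are equivalent: (1) s ⋆ t ≥ u pointwise; (2) s ≥ u ◁ t^∨ pointwise; (3) t ≥ s^∨ ▷ u pointwise. Consequently, u ◁ t^∨ is the pointwise-minimum element of {s ∈ SF : s ⋆ t ≥ u} and s^∨ ▷ u is the pointwise-minimum element of {t ∈ SF : s ⋆ t ≥ u}. -/
theorem star_ge_iff {s t u v : ℤ → ℤ → ℕ} (hv : IsStarSF s t v) :
    PLE u v ↔ ∀ a b ℓ : ℤ, u a b ≤ s a ℓ + t ℓ b := by
  constructor
  · intro h a b ℓ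
    exact (h a b).trans ((hv a b).2 ⟨ℓ, rfl⟩)
  · intro h a b
    obtain ⟨ℓ, hℓ⟩ := (hv a b).1
    rw [hℓ]
    exact h a b ℓ

theorem exists_star (s t : ℤ → ℤ → ℕ) : ∃ v, IsStarSF s t v :=
  ⟨fun a b => sInf {x : ℕ | ∃ ℓ : ℤ, x = s a ℓ + t ℓ b}, fun a b =>
    ⟨Nat.sInf_mem ⟨s a 0 + t 0 b, 0, rfl⟩, fun _ hx => Nat.sInf_le hx⟩⟩

/-- `w = u ◁ t^∨` says `w(a,b) = max_ℓ [u(a,ℓ) - t(b,ℓ)]`, by double duality. -/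
theorem triL_iff {χt : ℤ} {u t t' w : ℤ → ℤ → ℕ}
    (ht' : ∀ a b : ℤ, (t' a b : ℤ) = dualSF χt t a b) (hw : IsTriLSF (-χt) u t' w) (a b : ℤ) :
    (∀ ℓ, u a ℓ ≤ w a b + t b ℓ) ∧ ∃ ℓ, u a ℓ = w a b + t b ℓ := by
  have hd : ∀ ℓ, dualSF (-χt) t' b ℓ = t b ℓ := fun ℓ => by
    have := ht' ℓ b
    simp only [dualSF] at this ⊢
    omega
  obtain ⟨⟨ℓ₀, h₀⟩, hmax⟩ := hw a b
  refine ⟨fun ℓ => ?_, ℓ₀, ?_⟩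
  · have : (u a ℓ : ℤ) - dualSF (-χt) t' b ℓ ≤ w a b := hmax ⟨ℓ, rfl⟩
    rw [hd] at this
    omega
  · rw [hd] at h₀
    omega

/-- `x = s^∨ ▷ u` says `x(a,b) = max_ℓ [u(ℓ,b) - s(ℓ,a)]`, by double duality. -/
theorem triR_iff {χs : ℤ} {u s s' x : ℤ → ℤ → ℕ}
    (hs' : ∀ a b : ℤ, (s' a b : ℤ) = dualSF χs s a b) (hx : IsTriRSF (-χs) s' u x) (a b : ℤ) :
    (∀ ℓ, u ℓ b ≤ x a b + s ℓ a) ∧ ∃ ℓ, u ℓ b = x a b + s ℓ a := by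
  have hd : ∀ ℓ, dualSF (-χs) s' ℓ a = s ℓ a := fun ℓ => by
    have := hs' a ℓ
    simp only [dualSF] at this ⊢
    omega
  obtain ⟨⟨ℓ₀, h₀⟩, hmax⟩ := hx a b
  refine ⟨fun ℓ => ?_, ℓ₀, ?_⟩
  · have : (u ℓ b : ℤ) - dualSF (-χs) s' ℓ a ≤ x a b := hmax ⟨ℓ, rfl⟩
    rw [hd] at this
    omega
  · rw [hd] at h₀
    omega

/-- An integer function with steps in `{0, 1}` is monotone and `1`-Lipschitz. -/
theorem step_bound {f : ℤ → ℕ} (h : ∀ a, f a ≤ f (a + 1) ∧ f (a + 1) ≤ f a + 1) (a b : ℤ) :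
    (f a : ℤ) ≤ f b + max 0 (a - b) := by
  have key : ∀ (n : ℕ) (c : ℤ), f c ≤ f (c + n) ∧ f (c + n) ≤ f c + n := by
    intro n c
    induction n with
    | zero => simp
    | succ n ih =>
      have := h (c + n)
      rw [add_assoc] at this
      push_cast
      omega
  rcases le_total a b with hab | hab
  · have := (key (b - a).toNat a).1
    rw [show a + ((b - a).toNat : ℤ) = b by omega] at this
    omega
  · have := (key (a - b).toNat b).2
    rw [show b + ((a - b).toNat : ℤ) = a by omega] at this
    omega

theorem row_bound {χ : ℤ} {u : ℤ → ℤ → ℕ} (hu : IsSlipfaceOf χ u) (a b b' : ℤ) :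
    (u a b : ℤ) ≤ u a b' + max 0 (b' - b) := by
  have := step_bound (f := fun c => u a (-c)) (fun c => by
    have := (hu.1 a (-(c + 1))).2
    rwa [show -(c + 1) + 1 = -c by ring] at this) (-b) (-b')
  simp only [neg_neg] at this
  rwa [show -b - -b' = b' - b by ring] at this

theorem col_bound {χ : ℤ} {u : ℤ → ℤ → ℕ} (hu : IsSlipfaceOf χ u) (a a' b : ℤ) :
    (u a b : ℤ) ≤ u a' b + max 0 (a - a') :=
  step_bound (f := fun c => u c b) (fun c => (hu.1 c b).1) a a'

theorem triL_slipface {χt χu : ℤ} {t u w : ℤ → ℤ → ℕ}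
    (ht : IsSlipfaceOf χt t) (hu : IsSlipfaceOf χu u)
    (hw : ∀ a b, (∀ ℓ, u a ℓ ≤ w a b + t b ℓ) ∧ ∃ ℓ, u a ℓ = w a b + t b ℓ) :
    IsSlipfaceOf (χu - χt) w := by
  have lower : ∀ a b, max 0 (χu - χt + a - b) ≤ (w a b : ℤ) := by
    intro a b
    -- Far to the left both rows have left their exceptional sets and grow with slope `-1`.
    obtain ⟨ℓ, hℓ, hℓ'⟩ := (Set.Iic_infinite (min (χu + a) (χt + b))).exists_notMem_finite
      ((hu.2.2.2 a).union (ht.2.2.2 b))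
    simp only [Set.mem_union, Set.mem_ofPred_eq, not_or, not_not, Set.mem_Iic] at hℓ hℓ'
    have := (hw a b).1 ℓ
    omega
  have upper : ∀ a b, (w a b : ℤ) ≤ u a (χt + b) := by
    intro a b
    obtain ⟨ℓ, hℓ⟩ := (hw a b).2
    have h1 := row_bound hu a ℓ (χt + b)
    have h2 := ht.2.1 b ℓ
    omega
  refine ⟨fun a b => ⟨⟨?_, ?_⟩, ?_, ?_⟩, lower, fun b => ?_, fun a => ?_⟩
  · obtain ⟨ℓ, hℓ⟩ := (hw a b).2
    have := (hw (a + 1) b).1 ℓ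
    have := (hu.1 a ℓ).1
    omega
  · obtain ⟨ℓ, hℓ⟩ := (hw (a + 1) b).2
    have := (hw a b).1 ℓ
    have := (hu.1 a ℓ).1
    omega
  · obtain ⟨ℓ, hℓ⟩ := (hw a (b + 1)).2
    have := (hw a b).1 ℓ
    have := (ht.1 b ℓ).1
    omega
  · obtain ⟨ℓ, hℓ⟩ := (hw a b).2
    have := (hw a (b + 1)).1 ℓ
    have := (ht.1 b ℓ).1
    omega
  · refine (hu.2.2.1 (χt + b)).subset fun a ha => ?_
    simp only [Set.mem_ofPred_eq] at ha ⊢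
    have := lower a b
    have := upper a b
    omega
  · refine ((hu.2.2.2 a).preimage (add_right_injective χt).injOn).subset fun b hb => ?_
    simp only [Set.mem_ofPred_eq, Set.mem_preimage] at hb ⊢
    have := lower a b
    have := upper a b
    omega

theorem triR_slipface {χs χu : ℤ} {s u x : ℤ → ℤ → ℕ}
    (hs : IsSlipfaceOf χs s) (hu : IsSlipfaceOf χu u)
    (hx : ∀ a b, (∀ ℓ, u ℓ b ≤ x a b + s ℓ a) ∧ ∃ ℓ, u ℓ b = x a b + s ℓ a) :
    IsSlipfaceOf (χu - χs) x := by
  have lower : ∀ a b, max 0 (χu - χs + a - b) ≤ (x a b : ℤ) := by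
    intro a b
    -- Far to the right both columns have left their exceptional sets and grow with slope `1`.
    obtain ⟨ℓ, hℓ, hℓ'⟩ := (Set.Ici_infinite (max (b - χu) (a - χs))).exists_notMem_finite
      ((hu.2.2.1 b).union (hs.2.2.1 a))
    simp only [Set.mem_union, Set.mem_ofPred_eq, not_or, not_not, Set.mem_Ici] at hℓ hℓ'
    have := (hx a b).1 ℓ
    omega
  have upper : ∀ a b, (x a b : ℤ) ≤ u (a - χs) b := by
    intro a b
    obtain ⟨ℓ, hℓ⟩ := (hx a b).2
    have h1 := col_bound hu ℓ (a - χs) b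
    have h2 := hs.2.1 ℓ a
    omega
  refine ⟨fun a b => ⟨⟨?_, ?_⟩, ?_, ?_⟩, lower, fun b => ?_, fun a => ?_⟩
  · obtain ⟨ℓ, hℓ⟩ := (hx a b).2
    have := (hx (a + 1) b).1 ℓ
    have := (hs.1 ℓ a).2
    omega
  · obtain ⟨ℓ, hℓ⟩ := (hx (a + 1) b).2
    have := (hx a b).1 ℓ
    have := (hs.1 ℓ a).2
    omega
  · obtain ⟨ℓ, hℓ⟩ := (hx a (b + 1)).2
    have := (hx a b).1 ℓ
    have := (hu.1 ℓ b).2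
    omega
  · obtain ⟨ℓ, hℓ⟩ := (hx a b).2
    have := (hx a (b + 1)).1 ℓ
    have := (hu.1 ℓ b).2
    omega
  · refine ((hu.2.2.1 b).preimage (sub_left_injective (b := χs)).injOn).subset fun a ha => ?_
    simp only [Set.mem_ofPred_eq, Set.mem_preimage] at ha ⊢
    have := lower a b
    have := upper a b
    omega
  · refine (hu.2.2.2 (a - χs)).subset fun b hb => ?_
    simp only [Set.mem_ofPred_eq] at hb ⊢
    have := lower a b
    have := upper a b
    omega

/-- For slipfaces `s, t, u`: `s ⋆ t ≥ u` iff `u ◁ t^∨ ≤ s` iff `s^∨ ▷ u ≤ t`.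
Consequently `u ◁ t^∨` is the pointwise-least slipface `z` with `z ⋆ t ≥ u`, and
`s^∨ ▷ u` is the pointwise-least slipface `z` with `s ⋆ z ≥ u`.
Here `s'` and `t'` are the (ℕ-valued) dual slipfaces `s^∨`, `t^∨`. -/
theorem slipface_op_char (χs χt χu : ℤ) (s t u : ℤ → ℤ → ℕ)
    (hs : IsSlipfaceOf χs s) (ht : IsSlipfaceOf χt t) (hu : IsSlipfaceOf χu u)
    (s' t' : ℤ → ℤ → ℕ)
    (hs' : ∀ a b : ℤ, (s' a b : ℤ) = dualSF χs s a b)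
    (ht' : ∀ a b : ℤ, (t' a b : ℤ) = dualSF χt t a b)
    (v w x : ℤ → ℤ → ℕ)
    (hv : IsStarSF s t v) (hw : IsTriLSF (-χt) u t' w) (hx : IsTriRSF (-χs) s' u x) :
    ((PLE u v ↔ PLE w s) ∧ (PLE u v ↔ PLE x t)) ∧
    (IsSlipface w ∧ (∀ v₂ : ℤ → ℤ → ℕ, IsStarSF w t v₂ → PLE u v₂) ∧
      (∀ z : ℤ → ℤ → ℕ, IsSlipface z → (∀ v₂ : ℤ → ℤ → ℕ, IsStarSF z t v₂ → PLE u v₂) →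
        PLE w z)) ∧
    (IsSlipface x ∧ (∀ v₂ : ℤ → ℤ → ℕ, IsStarSF s x v₂ → PLE u v₂) ∧
      (∀ z : ℤ → ℤ → ℕ, IsSlipface z → (∀ v₂ : ℤ → ℤ → ℕ, IsStarSF s z v₂ → PLE u v₂) →
        PLE x z)) := by
  have hW := triL_iff ht' hw
  have hX := triR_iff hs' hx
  have keyW : ∀ z : ℤ → ℤ → ℕ, (∀ a b ℓ : ℤ, u a b ≤ z a ℓ + t ℓ b) ↔ PLE w z := by
    refine fun z => ⟨fun h a b => ?_, fun h a b ℓ => ?_⟩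
    · obtain ⟨ℓ, hℓ⟩ := (hW a b).2
      have := h a ℓ b
      omega
    · have := (hW a ℓ).1 b
      have := h a ℓ
      omega
  have keyX : ∀ z : ℤ → ℤ → ℕ, (∀ a b ℓ : ℤ, u a b ≤ s a ℓ + z ℓ b) ↔ PLE x z := by
    refine fun z => ⟨fun h a b => ?_, fun h a b ℓ => ?_⟩
    · obtain ⟨ℓ, hℓ⟩ := (hX a b).2
      have := h ℓ b a
      omega
    · have := (hX ℓ b).1 a
      have := h ℓ b
      omega
  refine ⟨⟨(star_ge_iff hv).trans (keyW s), (star_ge_iff hv).trans (keyX t)⟩,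
    ⟨⟨_, triL_slipface ht hu hW⟩, fun v₂ h₂ => (star_ge_iff h₂).2 ((keyW w).2 fun _ _ => le_rfl),
      fun z _ h => ?_⟩,
    ⟨⟨_, triR_slipface hs hu hX⟩, fun v₂ h₂ => (star_ge_iff h₂).2 ((keyX x).2 fun _ _ => le_rfl),
      fun z _ h => ?_⟩⟩
  · obtain ⟨v₂, h₂⟩ := exists_star z t
    exact (keyW z).1 ((star_ge_iff h₂).1 (h v₂ h₂))
  · obtain ⟨v₂, h₂⟩ := exists_star s z
    exact (keyX z).1 ((star_ge_iff h₂).1 (h v₂ h₂))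
end

section
/- For all slipfaces s, t, u, the operations ⋆, ◁, ▷ satisfy: (1) s ⋆ (t ⋆ u) = (s ⋆ t) ⋆ u; (2) (s ◁ t) ◁ u = s ◁ (t ⋆ u); (3) s ▷ (t ▷ u) = (s ⋆ t) ▷ u. -/
section Extrema

variable {χ a b : ℤ} {s t u : ℤ → ℤ → ℕ}

theorem IsStarSF.le (h : IsStarSF s t u) (a ℓ b : ℤ) : u a b ≤ s a ℓ + t ℓ b :=
  (h a b).2 ⟨ℓ, rfl⟩

theorem IsStarSF.attained (h : IsStarSF s t u) (a b : ℤ) : ∃ ℓ, u a b = s a ℓ + t ℓ b :=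
  (h a b).1

theorem IsTriLSF.ge (h : IsTriLSF χ s t u) (a ℓ b : ℤ) :
    (s a ℓ : ℤ) - (t ℓ b - (χ + ℓ - b)) ≤ u a b :=
  (h a b).2 ⟨ℓ, rfl⟩

theorem IsTriLSF.attained (h : IsTriLSF χ s t u) (a b : ℤ) :
    ∃ ℓ, (u a b : ℤ) = s a ℓ - (t ℓ b - (χ + ℓ - b)) :=
  (h a b).1

theorem IsTriRSF.ge (h : IsTriRSF χ s t u) (a ℓ b : ℤ) :
    (t ℓ b : ℤ) - (s a ℓ - (χ + a - ℓ)) ≤ u a b :=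
  (h a b).2 ⟨ℓ, rfl⟩

theorem IsTriRSF.attained (h : IsTriRSF χ s t u) (a b : ℤ) :
    ∃ ℓ, (u a b : ℤ) = t ℓ b - (s a ℓ - (χ + a - ℓ)) :=
  (h a b).1

end Extrema

/-- Identities for the slipface operations: `s ⋆ (t ⋆ u) = (s ⋆ t) ⋆ u`,
`(s ◁ t) ◁ u = s ◁ (t ⋆ u)`, and `s ▷ (t ▷ u) = (s ⋆ t) ▷ u`. -/
theorem slipface_op_identities (χs χt χu : ℤ) (s t u : ℤ → ℤ → ℕ)
    (hs : IsSlipfaceOf χs s) (ht : IsSlipfaceOf χt t) (hu : IsSlipfaceOf χu u) :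
    (∀ v w x y : ℤ → ℤ → ℕ,
      IsStarSF t u v → IsStarSF s v w → IsStarSF s t x → IsStarSF x u y → w = y) ∧
    (∀ v w x y : ℤ → ℤ → ℕ,
      IsTriLSF χt s t v → IsTriLSF χu v u w → IsStarSF t u x →
        IsTriLSF (χt + χu) s x y → w = y) ∧
    (∀ v w x y : ℤ → ℤ → ℕ,
      IsTriRSF χt t u v → IsTriRSF χs s v w → IsStarSF s t x →
        IsTriRSF (χs + χt) x u y → w = y) := by
  refine ⟨?_, ?_, ?_⟩ <;> intro v w x y hv hw hx hy <;> funext a b <;> apply le_antisymm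
  · obtain ⟨m, hm⟩ := hy.attained a b
    obtain ⟨ℓ, hℓ⟩ := hx.attained a m
    have h₁ := hw.le a ℓ b
    have h₂ := hv.le ℓ m b
    lia
  · obtain ⟨ℓ, hℓ⟩ := hw.attained a b
    obtain ⟨m, hm⟩ := hv.attained ℓ b
    have h₁ := hy.le a m b
    have h₂ := hx.le a ℓ m
    lia
  · obtain ⟨ℓ, hℓ⟩ := hw.attained a b
    obtain ⟨m, hm⟩ := hv.attained a ℓ
    have h₁ := hy.ge a m b
    have h₂ := hx.le m ℓ b
    lia
  · obtain ⟨m, hm⟩ := hy.attained a b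
    obtain ⟨ℓ, hℓ⟩ := hx.attained m b
    have h₁ := hw.ge a ℓ b
    have h₂ := hv.ge a m ℓ
    lia
  · obtain ⟨ℓ, hℓ⟩ := hw.attained a b
    obtain ⟨m, hm⟩ := hv.attained ℓ b
    have h₁ := hy.ge a m b
    have h₂ := hx.le a ℓ m
    lia
  · obtain ⟨m, hm⟩ := hy.attained a b
    obtain ⟨ℓ, hℓ⟩ := hx.attained a m
    have h₁ := hw.ge a ℓ b
    have h₂ := hv.ge ℓ m b
    lia
end

section
/- Let S ⊆ ℤ be a set containing no two consecutive integers, let σ_S be the associated permutation, and let s be any slipface. Then for all a,b ∈ ℤ: s ⋆ s_{σ_S}(a,b) = s(a,b) + 1 if b−1 ∈ S and s(a,b−1) > s(a,b) = s(a,b+1), and s ⋆ s_{σ_S}(a,b) = s(a,b) otherwise; likewise s ◁ s_{σ_S}(a,b) = s(a,b) − 1 if b−1 ∈ S and s(a,b−1) = s(a,b) > s(a,b+1), and s ◁ s_{σ_S}(a,b) = s(a,b) otherwise. -/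
/-- `σ` is the permutation `σ_S`: it exchanges `n` and `n+1` for every `n ∈ S`
and fixes every other integer. -/
def IsSigmaS (S : Set ℤ) (σ : Equiv.Perm ℤ) : Prop :=
  (∀ n ∈ S, σ n = n + 1 ∧ σ (n + 1) = n) ∧
  (∀ m : ℤ, m ∉ S → m - 1 ∉ S → σ m = m)

/-- Each integer is in `S`, or a successor of an element of `S`, or outside both; `σ` has the
corresponding value. -/
theorem sigma_cases {S : Set ℤ} {σ : Equiv.Perm ℤ} (hσ : IsSigmaS S σ) (m : ℤ) :
    (m ∈ S ∧ σ m = m + 1) ∨ (m - 1 ∈ S ∧ σ m = m - 1) ∨ (m ∉ S ∧ m - 1 ∉ S ∧ σ m = m) := by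
  by_cases h1 : m ∈ S
  · exact Or.inl ⟨h1, (hσ.1 m h1).1⟩
  by_cases h2 : m - 1 ∈ S
  · have h := (hσ.1 _ h2).2
    rw [sub_add_cancel] at h
    exact Or.inr (Or.inl ⟨h2, h⟩)
  · exact Or.inr (Or.inr ⟨h1, h2, hσ.2 m h1 h2⟩)

theorem sigma_sigma {S : Set ℤ} {σ : Equiv.Perm ℤ} (hσ : IsSigmaS S σ) (m : ℤ) :
    σ (σ m) = m := by
  rcases sigma_cases hσ m with ⟨h, e⟩ | ⟨h, e⟩ | ⟨_, _, e⟩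
  · rw [e, (hσ.1 m h).2]
  · rw [e, (hσ.1 _ h).1, sub_add_cancel]
  · rw [e, e]

/-- Because `σ` is an involution, the slipface may be counted by the values of `σ`. -/
theorem sF_sigma_eq {S : Set ℤ} {σ : Equiv.Perm ℤ} (hσ : IsSigmaS S σ) (l b : ℤ) :
    sF σ l b = {m : ℤ | b ≤ σ m ∧ m < l}.ncard := by
  rw [← Set.ncard_image_of_injective _ σ.injective]
  unfold sF
  congr 1
  ext n
  constructor
  · rintro ⟨h1, h2⟩
    exact ⟨σ n, ⟨by rwa [sigma_sigma hσ], h2⟩, sigma_sigma hσ n⟩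
  · rintro ⟨m, ⟨h1, h2⟩, rfl⟩
    exact ⟨h1, by rwa [sigma_sigma hσ]⟩

theorem sF_sigma_of_notMem {S : Set ℤ} {σ : Equiv.Perm ℤ} (hσ : IsSigmaS S σ) {b : ℤ}
    (hb : b - 1 ∉ S) (l : ℤ) : (sF σ l b : ℤ) = max 0 (l - b) := by
  have key : {m : ℤ | b ≤ σ m ∧ m < l} = ↑(Finset.Ico b l) := by
    ext m
    simp only [Set.mem_ofPred_eq, Finset.coe_Ico, Set.mem_Ico]
    rcases sigma_cases hσ m with ⟨h, e⟩ | ⟨h, e⟩ | ⟨_, _, e⟩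
    · have : m ≠ b - 1 := fun h' => hb (h' ▸ h)
      omega
    · have : m ≠ b := fun h' => hb (h' ▸ h)
      omega
    · omega
  rw [sF_sigma_eq hσ, key, Set.ncard_coe_finset, Int.card_Ico, Int.toNat_eq_max, max_comm]

theorem sF_sigma_of_mem {S : Set ℤ} (hS : ∀ n ∈ S, n + 1 ∉ S) {σ : Equiv.Perm ℤ}
    (hσ : IsSigmaS S σ) {b : ℤ} (hb : b - 1 ∈ S) (l : ℤ) :
    (sF σ l b : ℤ) = if l = b then 1 else max 0 (l - b) := by
  have hbS : b ∉ S := by simpa using hS _ hb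
  have hb2 : b - 1 - 1 ∉ S := fun h => hS _ h (by simpa using hb)
  have hmem : ∀ m : ℤ, b ≤ σ m ↔ m = b - 1 ∨ b + 1 ≤ m := by
    intro m
    rcases sigma_cases hσ m with ⟨h, e⟩ | ⟨h, e⟩ | ⟨h1, h2, e⟩
    · have : m ≠ b := fun h' => hbS (h' ▸ h)
      omega
    · have : m ≠ b - 1 := fun h' => hb2 (h' ▸ h)
      omega
    · have : m ≠ b := fun h' => h2 (h' ▸ hb)
      have : m ≠ b - 1 := fun h' => h1 (h' ▸ hb)
      omega
  rw [sF_sigma_eq hσ]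
  rcases lt_or_ge l b with hl | hl
  · have key : {m : ℤ | b ≤ σ m ∧ m < l} = ∅ := by
      ext m
      simp only [Set.mem_ofPred_eq, hmem, Set.mem_empty_iff_false, iff_false]
      omega
    rw [key, Set.ncard_empty]
    split_ifs <;> omega
  · have key : {m : ℤ | b ≤ σ m ∧ m < l} = ↑(insert (b - 1) (Finset.Ico (b + 1) l)) := by
      ext m
      simp only [Set.mem_ofPred_eq, hmem, Finset.coe_insert, Finset.coe_Ico, Set.mem_insert_iff,
        Set.mem_Ico]
      omega
    rw [key, Set.ncard_coe_finset, Finset.card_insert_of_notMem (by simp), Int.card_Ico]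
    split_ifs <;> omega

/-- A row `s(a,·)` of a slipface is decreasing and `1`-Lipschitz. -/
theorem slipface_row {χ : ℤ} {s : ℤ → ℤ → ℕ} (hs : IsSlipfaceOf χ s) (a : ℤ) {l m : ℤ}
    (h : l ≤ m) : s a m ≤ s a l ∧ (s a l : ℤ) ≤ s a m + (m - l) := by
  induction m, h using Int.leInduction with
  | base => simp
  | succ m _ ih =>
    have := (hs.1 a m).2
    omega


open scoped Classical in
/-- For a slipface `s` and `σ_S` with `S` containing no two consecutive integers:
`(s ⋆ s_{σ_S})(a,b) = s(a,b) + δ[b-1 ∈ S ∧ s(a,b-1) > s(a,b) = s(a,b+1)]` and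
`(s ◁ s_{σ_S})(a,b) = s(a,b) - δ[b-1 ∈ S ∧ s(a,b-1) = s(a,b) > s(a,b+1)]`
(note `σ_S` has shift `0`, so `s_{σ_S}^∨ = dualSF 0 (sF σ_S)`). -/
theorem star_triL_slipface_sigmaS (S : Set ℤ) (hS : ∀ n ∈ S, n + 1 ∉ S)
    (σ : Equiv.Perm ℤ) (hσ : IsSigmaS S σ)
    (χ : ℤ) (s : ℤ → ℤ → ℕ) (hs : IsSlipfaceOf χ s) :
    (∀ u : ℤ → ℤ → ℕ, IsStarSF s (sF σ) u → ∀ a b : ℤ,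
      u a b = if b - 1 ∈ S ∧ s a b < s a (b - 1) ∧ s a b = s a (b + 1)
        then s a b + 1 else s a b) ∧
    (∀ v : ℤ → ℤ → ℕ, IsTriLSF 0 s (sF σ) v → ∀ a b : ℤ,
      (v a b : ℤ) = if b - 1 ∈ S ∧ s a (b - 1) = s a b ∧ s a (b + 1) < s a b
        then (s a b : ℤ) - 1 else (s a b : ℤ)) := by
  have row : ∀ a l m : ℤ, (l ≤ m → s a m ≤ s a l ∧ (s a l : ℤ) ≤ s a m + (m - l)) :=
    fun a _ _ h => slipface_row hs a h
  constructor
  · intro u hu a b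
    obtain ⟨⟨l, hl⟩, hmin⟩ := hu a b
    have h0 := hmin ⟨b, rfl⟩
    have h1 := hmin ⟨b - 1, rfl⟩
    have h2 := hmin ⟨b + 1, rfl⟩
    have r1 := row a l (b - 1)
    have r2 := row a (b + 1) l
    have r3 := row a (b - 1) b
    have r4 := row a b (b + 1)
    by_cases hb : b - 1 ∈ S
    · have e := sF_sigma_of_mem hS hσ hb
      have el := e l
      have e0 := e b
      have e1 := e (b - 1)
      have e2 := e (b + 1)
      rcases lt_trichotomy l b with h | rfl | h <;> simp only [hb, true_and] <;> grind
    · have e := sF_sigma_of_notMem hσ hb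
      have el := e l
      have e0 := e b
      rcases lt_trichotomy l b with h | rfl | h <;> simp only [hb, false_and, if_false] <;> omega
  · intro v hv a b
    obtain ⟨⟨l, hl⟩, hmax⟩ := hv a b
    have h0 := hmax ⟨b, rfl⟩
    have h1 := hmax ⟨b - 1, rfl⟩
    have h2 := hmax ⟨b + 1, rfl⟩
    have r1 := row a l (b - 1)
    have r2 := row a (b + 1) l
    have r3 := row a (b - 1) b
    have r4 := row a b (b + 1)
    simp only [dualSF] at hl h0 h1 h2
    by_cases hb : b - 1 ∈ S
    · have e := sF_sigma_of_mem hS hσ hb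
      have el := e l
      have e0 := e b
      have e1 := e (b - 1)
      have e2 := e (b + 1)
      rcases lt_trichotomy l b with h | rfl | h <;> simp only [hb, true_and] <;> grind
    · have e := sF_sigma_of_notMem hσ hb
      have el := e l
      have e0 := e b
      rcases lt_trichotomy l b with h | rfl | h <;> simp only [hb, false_and, if_false] <;> omega
end

section
/- Let s be a Clifford slipface and t any slipface with χ_s ≤ χ_t. Then s ≤ t pointwise if and only if s(a,b) ≤ t(a,b) for all (a,b) in the essential set ess(s). -/
/-- The essential set of a slipface. -/
def essSF (s : ℤ → ℤ → ℕ) : Set (ℤ × ℤ) :=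
  {p : ℤ × ℤ | s (p.1 - 1) p.2 < s p.1 p.2 ∧ s p.1 p.2 = s (p.1 + 1) p.2 ∧
               s p.1 (p.2 + 1) < s p.1 p.2 ∧ s p.1 p.2 = s p.1 (p.2 - 1)}

/-- A slipface `s` of shift `χ` is Clifford if
`{s(a,b) + s^∨(b,a) : s(a,b) > 0 and s^∨(b,a) > 0}` is bounded above. -/
def CliffordSF (χ : ℤ) (s : ℤ → ℤ → ℕ) : Prop :=
  BddAbove {x : ℤ | ∃ a b : ℤ, x = (s a b : ℤ) + dualSF χ s b a ∧
    0 < s a b ∧ 0 < dualSF χ s b a}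

/-- The walk to an essential point, by induction on the room `n` left below the Clifford bound `M`. -/
theorem le_of_le_on_essSF {χs χt : ℤ} {s t : ℤ → ℤ → ℕ}
    (hs : IsSlipfaceOf χs s) (ht : IsSlipfaceOf χt t) (hχ : χs ≤ χt) {M : ℤ}
    (hM : ∀ a b : ℤ, 0 < s a b → 0 < dualSF χs s b a → (s a b : ℤ) + dualSF χs s b a ≤ M)
    (hess : ∀ a b : ℤ, (a, b) ∈ essSF s → s a b ≤ t a b) (n : ℕ) :
    ∀ a b : ℤ, M < (s a b : ℤ) + dualSF χs s b a + n → s a b ≤ t a b := by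
  induction n with
  | zero =>
    intro a b h
    by_contra! hlt
    have h1 := ht.2.1 a b
    have h2 := hM a b (by omega) (by unfold dualSF; omega)
    push_cast at h
    omega
  | succ n ih =>
    intro a b h
    by_contra! hlt
    have hsab := hs.1 a b
    have hsa := (hs.1 (a - 1) b).1
    have hsb := (hs.1 a (b - 1)).2
    have htab := ht.1 a b
    have hta := (ht.1 (a - 1) b).1
    have htb := (ht.1 a (b - 1)).2
    rw [sub_add_cancel] at hsa hsb hta htb
    have i1 := ih (a + 1) b
    have i2 := ih (a - 1) b
    have i3 := ih a (b + 1)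
    have i4 := ih a (b - 1)
    have he := hess a b
    simp only [essSF, Set.mem_ofPred_eq] at he
    simp only [dualSF] at h i1 i2 i3 i4
    push_cast at h
    -- Off the essential set, one of the four steps raises `s + s^∨` by one and keeps `t < s`.
    omega

/-- For a Clifford slipface `s` and any slipface `t` with `χ_s ≤ χ_t`, `s ≤ t`
pointwise iff `s(a,b) ≤ t(a,b)` on the essential set of `s`. -/
theorem essential_set_criterion (χs χt : ℤ) (s t : ℤ → ℤ → ℕ)
    (hs : IsSlipfaceOf χs s) (ht : IsSlipfaceOf χt t)
    (hcl : CliffordSF χs s) (hχ : χs ≤ χt) :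
    PLE s t ↔ ∀ a b : ℤ, (a, b) ∈ essSF s → s a b ≤ t a b := by
  refine ⟨fun h a b _ => h a b, fun hess a b => ?_⟩
  obtain ⟨M, hM⟩ := hcl
  refine le_of_le_on_essSF (M := M) hs ht hχ (fun a b h1 h2 => hM ⟨a, b, rfl, h1, h2⟩) hess
    (M - ((s a b : ℤ) + dualSF χs s b a) + 1).toNat a b ?_
  omega
end

section
/- Let α ∈ ASP. The following are equivalent: (1) the set {α(n) − n : n ∈ ℤ} is bounded; (2) there exists N ∈ ℤ such that s_α(a,b) = max{χ_α + a − b, 0} whenever |a − b| ≥ N; (3) the set {s_α(a,b) + s_{α⁻¹}(b,a) : a,b ∈ ℤ, s_α(a,b) > 0 and s_{α⁻¹}(b,a) > 0} is bounded above. -/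
theorem sF_mono_left {α : Equiv.Perm ℤ} (hα : ASP α) {a a' : ℤ} (h : a ≤ a') (b : ℤ) :
    sF α a b ≤ sF α a' b :=
  Set.ncard_le_ncard (fun _ hn => ⟨hn.1, hn.2.trans_le h⟩) (hα.finite a' b)

theorem sF_pos_iff {α : Equiv.Perm ℤ} (hα : ASP α) {a b : ℤ} :
    0 < sF α a b ↔ ∃ n, b ≤ n ∧ α n < a :=
  Set.ncard_pos (hα.finite a b)

/-- A function on `ℤ` whose increments are all equal to `c` is affine of slope `c`. -/
theorem affine_of_step (f : ℤ → ℤ) (c : ℤ) (h : ∀ a, f (a + 1) = f a + c) (a : ℤ) :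
    f a = f 0 + c * a := by
  induction a using Int.induction_on with
  | zero => simp
  | succ i ih => rw [h, ih]; ring
  | pred i ih =>
    have := h (-(i : ℤ) - 1)
    rw [sub_add_cancel, ih] at this
    linarith

/-- The duality between the slipface functions of `α` and `α⁻¹`: their difference is affine,
with constant term the shift. -/
theorem sF_duality {α : Equiv.Perm ℤ} (hα : ASP α) (a b : ℤ) :
    (sF α a b : ℤ) - sF α⁻¹ b a = shiftASP α + a - b := by
  have h1 := affine_of_step (fun a => (sF α a b : ℤ) - sF α⁻¹ b a) 1 (fun a => by
    have e1 := sF_succ_left hα a b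
    have e2 := sF_succ_right hα.inv b a
    split_ifs at e1 e2 <;> omega) a
  have h2 := affine_of_step (fun b => (sF α 0 b : ℤ) - sF α⁻¹ b 0) (-1) (fun b => by
    have e1 := sF_succ_right hα 0 b
    have e2 := sF_succ_left hα.inv b 0
    rw [inv_inv] at e2
    split_ifs at e1 e2 <;> omega) b
  unfold shiftASP
  linarith

theorem slipface_of_bounded {α : Equiv.Perm ℤ} (hα : ASP α)
    (h : ∃ M : ℤ, ∀ n : ℤ, |α n - n| ≤ M) :
    ∃ N : ℤ, ∀ a b : ℤ, N ≤ |a - b| → (sF α a b : ℤ) = max (shiftASP α + a - b) 0 := by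
  obtain ⟨M, hM⟩ := h
  refine ⟨M + 1, fun a b hab => ?_⟩
  have hd := sF_duality hα a b
  suffices hz : sF α a b = 0 ∨ sF α⁻¹ b a = 0 by omega
  by_contra! hne
  obtain ⟨n, hn1, hn2⟩ := (sF_pos_iff hα).1 (Nat.pos_of_ne_zero hne.1)
  obtain ⟨m, hm1, hm2⟩ := (sF_pos_iff hα.inv).1 (Nat.pos_of_ne_zero hne.2)
  have h1 := abs_le.1 (hM n)
  have h2 := abs_le.1 (hM (α⁻¹ m))
  rw [show α (α⁻¹ m) = m by simp] at h2
  rcases le_abs.1 hab with h | h <;> omega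

theorem bddAbove_of_slipface {α : Equiv.Perm ℤ} (hα : ASP α)
    (h : ∃ N : ℤ, ∀ a b : ℤ, N ≤ |a - b| →
      (sF α a b : ℤ) = max (shiftASP α + a - b) 0) :
    BddAbove {x : ℕ | ∃ a b : ℤ, x = sF α a b + sF α⁻¹ b a ∧
        0 < sF α a b ∧ 0 < sF α⁻¹ b a} := by
  obtain ⟨N, hN⟩ := h
  refine ⟨(2 * max (shiftASP α + N) 0 - shiftASP α + N).toNat, ?_⟩
  rintro x ⟨a, b, rfl, h1, h2⟩
  have hd := sF_duality hα a b
  have hlt : |a - b| < N := by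
    by_contra! hle
    have := hN a b hle
    omega
  have hab := abs_lt.1 hlt
  have hmono := sF_mono_left hα (show a ≤ b + N by omega) b
  have hbN := hN (b + N) b (by rw [add_sub_cancel_left]; exact le_abs_self N)
  omega

theorem bounded_of_bddAbove {α : Equiv.Perm ℤ} (hα : ASP α)
    (h : BddAbove {x : ℕ | ∃ a b : ℤ, x = sF α a b + sF α⁻¹ b a ∧
        0 < sF α a b ∧ 0 < sF α⁻¹ b a}) :
    ∃ M : ℤ, ∀ n : ℤ, |α n - n| ≤ M := by
  obtain ⟨B, hB⟩ := h
  refine ⟨B + 1 + |shiftASP α|, fun n => ?_⟩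
  have hχ := abs_le.1 (le_refl |shiftASP α|)
  have bound : ∀ a b : ℤ, 0 < sF α a b → 0 < sF α⁻¹ b a →
      sF α a b + sF α⁻¹ b a ≤ B := fun a b h1 h2 => hB ⟨a, b, rfl, h1, h2⟩
  have d1 := sF_duality hα (α n) (n + 1)
  have b1 := bound (α n) (n + 1)
  have p1 : 0 < sF α⁻¹ (n + 1) (α n) := (sF_pos_iff hα.inv).2 ⟨α n, le_rfl, by simp⟩
  have d2 := sF_duality hα (α n + 1) n
  have b2 := bound (α n + 1) n
  have p2 : 0 < sF α (α n + 1) n := (sF_pos_iff hα).2 ⟨n, le_rfl, by simp⟩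
  rw [abs_le]
  constructor <;> omega

/-- For `α ∈ ASP`, the following are equivalent: (1) `{α(n) - n}` is bounded;
(2) there is `N` with `s_α(a,b) = max{χ_α + a - b, 0}` whenever `|a - b| ≥ N`;
(3) `{s_α(a,b) + s_{α⁻¹}(b,a) : s_α(a,b) > 0, s_{α⁻¹}(b,a) > 0}` is bounded above. -/
theorem bounded_difference_tfae (α : Equiv.Perm ℤ) (hα : ASP α) :
    ((∃ M : ℤ, ∀ n : ℤ, |α n - n| ≤ M) ↔
      (∃ N : ℤ, ∀ a b : ℤ, N ≤ |a - b| → (sF α a b : ℤ) = max (shiftASP α + a - b) 0)) ∧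
    ((∃ N : ℤ, ∀ a b : ℤ, N ≤ |a - b| → (sF α a b : ℤ) = max (shiftASP α + a - b) 0) ↔
      BddAbove {x : ℕ | ∃ a b : ℤ, x = sF α a b + sF α⁻¹ b a ∧
        0 < sF α a b ∧ 0 < sF α⁻¹ b a}) := by
  exact ⟨⟨slipface_of_bounded hα, fun h => bounded_of_bddAbove hα (bddAbove_of_slipface hα h)⟩,
    ⟨bddAbove_of_slipface hα, fun h => slipface_of_bounded hα (bounded_of_bddAbove hα h)⟩⟩
end
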